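/- arXiv:1901.02316 — 3 statements merged into one kernel-verified Lean document; each statement's English description precedes it below -/
import Mathlib

section
/- Every w-split R-module is w-projective. -/
open CategoryTheory

universe u

section Defs
variable (R : Type u) [CommRing R]

/-- `J` is a Glaz–Vasconcelos ideal (GV-ideal): finitely generated and the natural map
`R → Hom_R(J, R)`, `r ↦ (x ↦ r•x)`, is an isomorphism. -/
def IsGVIdeal (J : Ideal R) : Prop :=
  J.FG ∧ Function.Bijective fun r : R =>
    ((LinearMap.lsmul R R r).comp J.subtype : J →ₗ[R] R)

variable (M : Type u) [AddCommGroup M] [Module R M]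

/-- `M` is GV-torsion: every element is killed by some GV-ideal. -/
def IsGVTorsion : Prop :=
  ∀ x : M, ∃ J : Ideal R, IsGVIdeal R J ∧ ∀ a ∈ J, a • x = 0

/-- `M` is GV-torsionfree: no nonzero element is killed by a GV-ideal. -/
def IsGVTorsionFree : Prop :=
  ∀ x : M, (∃ J : Ideal R, IsGVIdeal R J ∧ ∀ a ∈ J, a • x = 0) → x = 0

/-- The w-splitting condition on the epimorphism `g` of a short exact sequence:
there are a GV-ideal `⟨d₁,…,dₙ⟩` and maps `hₖ` with `g ∘ hₖ = (dₖ•·)`. -/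
def IsWSplitSeq {B C : Type u} [AddCommGroup B] [Module R B] [AddCommGroup C] [Module R C]
    (g : B →ₗ[R] C) : Prop :=
  ∃ (n : ℕ) (d : Fin n → R), IsGVIdeal R (Ideal.span (Set.range d)) ∧
    ∃ h : Fin n → (C →ₗ[R] B), ∀ k, ∀ c : C, g (h k c) = d k • c

/-- `M` is a w-split module: some short exact sequence `0 → K → P → M → 0` with
`P` projective is w-split. -/
def IsWSplitModule : Prop :=
  ∃ (P : Type u) (_ : AddCommGroup P) (_ : Module R P), Module.Projective R P ∧
    ∃ g : P →ₗ[R] M, Function.Surjective g ∧ IsWSplitSeq R g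

/-- The Ext group `Ext^n_R(M, N)` as an object of `ModuleCat R`. -/
noncomputable def extMod (n : ℕ) (N : Type u) [AddCommGroup N] [Module R N] : ModuleCat.{u} R :=
  ((Ext R (ModuleCat.{u} R) n).obj (Opposite.op (ModuleCat.of R M))).obj (ModuleCat.of R N)

/-- `M` is a w-module: GV-torsionfree and `Ext¹_R(R/J, M) = 0` for all GV-ideals `J`. -/
def IsWModule : Prop :=
  IsGVTorsionFree R M ∧
    ∀ J : Ideal R, IsGVIdeal R J → Subsingleton (extMod R (R ⧸ J) 1 M)

/-- `ι : M →ₗ E` exhibits `E` as a w-envelope `M_w` of the GV-torsionfree module `M`: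
`E` is a w-module containing `M` with GV-torsion quotient `E/M`. -/
def IsWEnvelope (E : Type u) [AddCommGroup E] [Module R E] (ι : M →ₗ[R] E) : Prop :=
  Function.Injective ι ∧ IsWModule R E ∧ IsGVTorsion R (E ⧸ LinearMap.range ι)

/-- `M` is w-projective: `Ext¹_R(L(M), N)` is GV-torsion for every GV-torsionfree
w-module `N`, where `L(M) = (M/tor_GV(M))_w`. -/
def IsWProjective : Prop :=
  ∀ (T : Submodule R M),
    (∀ x : M, x ∈ T ↔ ∃ J : Ideal R, IsGVIdeal R J ∧ ∀ a ∈ J, a • x = 0) →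
    ∀ (L : Type u) (_ : AddCommGroup L) (_ : Module R L) (ι : (M ⧸ T) →ₗ[R] L),
      IsWEnvelope R (M ⧸ T) L ι →
      ∀ (N : Type u) (_ : AddCommGroup N) (_ : Module R N),
        IsGVTorsionFree R N → IsWModule R N → IsGVTorsion R (extMod R L 1 N)

/-- `I` is a w-ideal: `I_w = I`, i.e. any `x` with `Jx ⊆ I` for some GV-ideal `J`
already lies in `I`. -/
def IsWIdeal (I : Ideal R) : Prop :=
  ∀ x : R, (∃ J : Ideal R, IsGVIdeal R J ∧ ∀ a ∈ J, a * x ∈ I) → x ∈ I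

/-- `I` is a maximal w-ideal: maximal among proper w-ideals of `R`. -/
def IsMaximalWIdeal (I : Ideal R) : Prop :=
  I ≠ ⊤ ∧ IsWIdeal R I ∧ ∀ I' : Ideal R, IsWIdeal R I' → I' ≠ ⊤ → I ≤ I' → I = I'

end Defs

section ExtCocycles

variable {R : Type u} [CommRing R] {X : ModuleCat.{u} R} (P : ProjectiveResolution X)
  (N : Type u) [AddCommGroup N] [Module R N]

/-- If `a` times every 1-cocycle is a coboundary, then `a` annihilates `Ext¹`. -/
theorem smul_ext_one_eq_zero {a : R}
    (H : ∀ f : P.complex.X 1 ⟶ ModuleCat.of R N, P.complex.d 2 1 ≫ f = 0 →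
      ∃ s : P.complex.X 0 ⟶ ModuleCat.of R N, P.complex.d 1 0 ≫ s = a • f)
    (x : ((Ext R (ModuleCat.{u} R) 1).obj (Opposite.op X)).obj (ModuleCat.of R N)) :
    a • x = 0 := by
  let K := P.complex.linearYonedaObj R (ModuleCat.of R N)
  let e := (P.isoExt (R := R) 1 (ModuleCat.of R N)).toLinearEquiv
  apply e.injective
  rw [map_smul, map_zero]
  obtain ⟨z, hz⟩ := (ModuleCat.epi_iff_surjective (K.homologyπ 1)).1 inferInstance (e x)
  obtain ⟨s, hs⟩ := H (K.iCycles 1 z)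
    (congr($(K.iCycles_d 1 2) z))
  have key : a • z = K.toCycles 0 1 s := by
    apply (ModuleCat.mono_iff_injective (K.iCycles 1)).1 inferInstance
    rw [map_smul]
    refine hs.symm.trans ?_
    exact congr($(K.toCycles_i 0 1) s).symm
  rw [← hz, ← map_smul, key]
  exact congr($(K.toCycles_comp_homologyπ 0 1) s)

/-- If `Ext¹` vanishes, then every 1-cocycle is a coboundary. -/
theorem exists_comp_eq_of_subsingleton_ext_one
    (H : Subsingleton (((Ext R (ModuleCat.{u} R) 1).obj (Opposite.op X)).obj (ModuleCat.of R N)))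
    (f : P.complex.X 1 ⟶ ModuleCat.of R N) (hf : P.complex.d 2 1 ≫ f = 0) :
    ∃ s : P.complex.X 0 ⟶ ModuleCat.of R N, P.complex.d 1 0 ≫ s = f := by
  let K := P.complex.linearYonedaObj R (ModuleCat.of R N)
  have h0 : Limits.IsZero (K.homology 1) :=
    (ModuleCat.isZero_of_subsingleton _).of_iso (P.isoExt (R := R) 1 (ModuleCat.of R N)).symm
  rw [← K.exactAt_iff_isZero_homology, K.exactAt_iff' 0 1 2 (by simp) (by simp),
    ShortComplex.moduleCat_exact_iff] at h0
  exact h0 f hf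

/-- The augmentation of a projective resolution, as a linear map. -/
noncomputable def resolutionAugmentation : P.complex.X 0 →ₗ[R] X :=
  (P.π.f 0 ≫ (HomologicalComplex.singleObjXSelf (ComplexShape.down ℕ) 0 X).hom).hom

theorem resolutionAugmentation_surjective : Function.Surjective (resolutionAugmentation P) :=
  (ModuleCat.epi_iff_surjective
    (P.π.f 0 ≫ (HomologicalComplex.singleObjXSelf (ComplexShape.down ℕ) 0 X).hom)).1
      (epi_comp _ _)

theorem resolutionAugmentation_exact :
    Function.Exact (P.complex.d 1 0).hom (resolutionAugmentation P) := by
  intro y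
  have inj := (ModuleCat.mono_iff_injective
    (HomologicalComplex.singleObjXSelf (ComplexShape.down ℕ) 0 X).hom).1 inferInstance
  constructor
  · intro h
    exact (ShortComplex.moduleCat_exact_iff _).1 P.exact₀ y (inj (h.trans (map_zero _).symm))
  · rintro ⟨p, rfl⟩
    have h : P.π.f 0 (P.complex.d 1 0 p) = 0 := congr($(P.complex_d_comp_π_f_zero) p)
    exact (congrArg (HomologicalComplex.singleObjXSelf (ComplexShape.down ℕ) 0 X).hom h).trans
      (map_zero _)

theorem resolution_projective : Module.Projective R (P.complex.X 0) :=
  (IsProjective.iff_projective _).2 (P.projective 0)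

end ExtCocycles

section WModules

variable {R : Type u} [CommRing R] {N : Type u} [AddCommGroup N] [Module R N]

/-- Homomorphisms from a GV-ideal to a w-module are given by multiplication by an element. -/
theorem IsWModule.exists_smul_eq (hN : IsWModule R N) {J : Ideal R} (hJ : IsGVIdeal R J)
    (φ : J →ₗ[R] N) : ∃ n : N, ∀ j : J, (j : R) • n = φ j := by
  let P := projectiveResolution (ModuleCat.of R (R ⧸ J))
  let ε : P.complex.X 0 →ₗ[R] R ⧸ J := resolutionAugmentation P
  have hε : Function.Surjective ε := resolutionAugmentation_surjective P
  have hex : Function.Exact (P.complex.d 1 0).hom ε := resolutionAugmentation_exact P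
  have := resolution_projective P
  obtain ⟨v, hv⟩ := Module.projective_lifting_property J.mkQ ε J.mkQ_surjective
  replace hv (x : P.complex.X 0) : J.mkQ (v x) = ε x := LinearMap.congr_fun hv x
  have hmem (p : P.complex.X 1) : v (P.complex.d 1 0 p) ∈ J := by
    rw [← Submodule.Quotient.mk_eq_zero]
    exact (hv _).trans (hex.apply_apply_eq_zero p)
  let f : P.complex.X 1 →ₗ[R] N :=
    φ ∘ₗ (v ∘ₗ (P.complex.d 1 0).hom).codRestrict J hmem
  obtain ⟨s, hs⟩ := exists_comp_eq_of_subsingleton_ext_one P N (hN.2 J hJ) (ModuleCat.ofHom f) (by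
    ext p
    have h : P.complex.d 1 0 (P.complex.d 2 1 p) = 0 := congr($(P.complex.d_comp_d 2 1 0) p)
    refine (congrArg φ (Subtype.ext ?_)).trans (map_zero φ)
    exact (congrArg v h).trans (map_zero v))
  replace hs (p : P.complex.X 1) : s (P.complex.d 1 0 p) = φ ⟨v (P.complex.d 1 0 p), hmem p⟩ :=
    congr($hs p)
  obtain ⟨x, hx⟩ := hε (J.mkQ 1)
  have hj₀ : 1 - v x ∈ J := by
    rw [← Submodule.Quotient.mk_eq_zero]
    exact (map_sub J.mkQ 1 (v x)).trans (by rw [hv, hx, sub_self])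
  refine ⟨s x + φ ⟨1 - v x, hj₀⟩, fun j => ?_⟩
  obtain ⟨p, hp⟩ := (hex ((j : R) • x)).1 (by
    rw [map_smul, hx, ← map_smul]
    exact (Submodule.Quotient.mk_eq_zero J).2 (by simp))
  have h1 : (j : R) • s.hom x = φ ⟨v (P.complex.d 1 0 p), hmem p⟩ := by
    rw [← map_smul, ← hp]
    exact hs p
  refine (smul_add _ _ _).trans ((congrArg₂ _ h1 (map_smul φ (j : R) _).symm).trans ?_)
  rw [← map_add]
  congr 1
  ext
  have h2 : v (P.complex.d 1 0 p) = (j : R) * v x := by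
    rw [← smul_eq_mul, ← map_smul]
    exact congrArg v hp
  simp only [Submodule.coe_add, Submodule.coe_smul, h2, smul_eq_mul]
  ring

variable {X L : Type u} [AddCommGroup X] [Module R X] [AddCommGroup L] [Module R L]

theorem IsGVTorsionFree.of_exact {i : N →ₗ[R] X} {q : X →ₗ[R] L} (hi : Function.Injective i)
    (hq : Function.Exact i q) (hN : IsGVTorsionFree R N) (hL : IsGVTorsionFree R L) :
    IsGVTorsionFree R X := by
  rintro x ⟨J, hJ, hx⟩
  obtain ⟨n, rfl⟩ := (hq x).1 (hL _ ⟨J, hJ, fun a ha => by rw [← map_smul, hx a ha, map_zero]⟩)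
  rw [hN n ⟨J, hJ, fun a ha => hi (by rw [map_smul, hx a ha, map_zero])⟩, map_zero]

theorem IsGVTorsionFree.eq_zero_of_smul₂ (hN : IsGVTorsionFree R N) {J₁ J₂ : Ideal R}
    (h₁ : IsGVIdeal R J₁) (h₂ : IsGVIdeal R J₂) {n : N}
    (h : ∀ a ∈ J₁, ∀ b ∈ J₂, (a * b) • n = 0) : n = 0 :=
  hN n ⟨J₁, h₁, fun a ha => hN _ ⟨J₂, h₂, fun b hb => by rw [smul_smul, mul_comm, h a ha b hb]⟩⟩

/-- Given an extension `0 → N → X → L` with `N` a w-module, and a submodule `A` of `L` with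
GV-torsion quotient, a lift to `X` of `c • ι : A → L` extends to a lift of `c • id : L → L`. -/
theorem IsWModule.exists_lift_extending (hN : IsWModule R N)
    {i : N →ₗ[R] X} {q : X →ₗ[R] L} (hi : Function.Injective i)
    (hq : Function.Exact i q) (hqs : Function.Surjective q)
    {A : Type u} [AddCommGroup A] [Module R A] {ι : A →ₗ[R] L} (hι : Function.Injective ι)
    (hA : IsGVTorsion R (L ⧸ LinearMap.range ι)) {θ : A →ₗ[R] X} {c : R}
    (hθ : ∀ a, q (θ a) = c • ι a) :
    ∃ r : L →ₗ[R] X, ∀ l, q (r l) = c • l := by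
  have key (l : L) : ∃ y : X, q y = c • l ∧ ∃ J : Ideal R, IsGVIdeal R J ∧
      ∀ j ∈ J, ∃ a, ι a = j • l ∧ θ a = j • y := by
    obtain ⟨J, hJ, hl⟩ := hA (Submodule.Quotient.mk l)
    replace hl (j : R) (hj : j ∈ J) : j • l ∈ LinearMap.range ι := by
      rw [← Submodule.Quotient.mk_eq_zero, Submodule.Quotient.mk_smul, hl j hj]
    obtain ⟨x, hx⟩ := hqs (c • l)
    let eA := LinearEquiv.ofInjective ι hι
    let α : J →ₗ[R] A := eA.symm.toLinearMap ∘ₗ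
      ((LinearMap.toSpanSingleton R L l ∘ₗ J.subtype).codRestrict (LinearMap.range ι)
        fun j => hl j j.2)
    have hα (j : J) : ι (α j) = (j : R) • l :=
      congrArg Subtype.val (eA.apply_symm_apply _)
    let ψ : J →ₗ[R] X := θ ∘ₗ α - LinearMap.toSpanSingleton R X x ∘ₗ J.subtype
    have hψ (j : J) : ψ j ∈ LinearMap.range i := by
      refine (hq _).1 ?_
      change q (θ (α j) - (j : R) • x) = 0
      rw [map_sub, hθ, hα, map_smul, hx, smul_comm, sub_self]
    let eN := LinearEquiv.ofInjective i hi
    obtain ⟨n, hn⟩ := hN.exists_smul_eq hJ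
      (eN.symm.toLinearMap ∘ₗ ψ.codRestrict (LinearMap.range i) hψ)
    refine ⟨x + i n, by rw [map_add, hx, hq.apply_apply_eq_zero, add_zero], J, hJ,
      fun j hj => ⟨α ⟨j, hj⟩, hα _, ?_⟩⟩
    have h : i (j • n) = θ (α ⟨j, hj⟩) - j • x := by
      rw [show j • n = _ from hn ⟨j, hj⟩]
      exact congrArg Subtype.val (eN.apply_symm_apply _)
    rw [smul_add, ← map_smul, h]
    abel
  choose r hr J hJ hrJ using key
  have ker_eq_zero {x : X} (hx : q x = 0) {J₁ J₂ : Ideal R} (h₁ : IsGVIdeal R J₁)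
      (h₂ : IsGVIdeal R J₂) {J₃ : Ideal R} (h₃ : IsGVIdeal R J₃)
      (h : ∀ a ∈ J₁, ∀ b ∈ J₂, ∀ d ∈ J₃, (a * b * d) • x = 0) : x = 0 := by
    obtain ⟨n, rfl⟩ := (hq x).1 hx
    rw [hN.1.eq_zero_of_smul₂ h₁ h₂ (n := n) fun a ha b hb => hN.1 _ ⟨J₃, h₃, fun d hd => hi ?_⟩,
      map_zero]
    rw [smul_smul, map_smul, mul_comm, h a ha b hb d hd, map_zero]
  refine ⟨{ toFun := r, map_add' := fun l m => ?_, map_smul' := fun t l => ?_ }, hr⟩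
  · rw [← sub_eq_zero]
    refine ker_eq_zero (by rw [map_sub, map_add, hr, hr, hr, smul_add, sub_self])
      (hJ (l + m)) (hJ l) (hJ m) fun a ha b hb d hd => ?_
    obtain ⟨x, hx, hx'⟩ := hrJ _ a ha
    obtain ⟨y, hy, hy'⟩ := hrJ _ b hb
    obtain ⟨z, hz, hz'⟩ := hrJ _ d hd
    have h : (b * d) • x - ((a * d) • y + (a * b) • z) = 0 := hι (by
      simp only [map_sub, map_add, map_smul, hx, hy, hz, map_zero]
      module)
    replace h := congrArg θ h
    simp only [map_sub, map_add, map_smul, hx', hy', hz', map_zero] at h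
    rw [← h]
    module
  · rw [← sub_eq_zero]
    refine ker_eq_zero (by simp [hr, smul_comm c t]) (hJ (t • l)) (hJ l) (hJ l)
      fun a ha b hb d _ => ?_
    obtain ⟨x, hx, hx'⟩ := hrJ _ a ha
    obtain ⟨y, hy, hy'⟩ := hrJ _ b hb
    have h : b • x - (a * t) • y = 0 := hι (by
      simp only [map_sub, map_smul, hx, hy, map_zero]
      module)
    replace h := congrArg θ h
    simp only [map_sub, map_smul, hx', hy', map_zero] at h
    rw [← smul_zero d, ← h]
    simp only [RingHom.id_apply]
    module

end WModules

section Main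

variable {R : Type u} [CommRing R]

/-- Suppose multiplication by `c` on `M` factors through a projective module, and let `L` be the
w-envelope of the GV-torsionfree quotient of `M`. Then `c` annihilates the class of every extension
`0 → N → X → L → 0` with `N` a w-module. -/
theorem exists_smul_retraction_of_lift {P M : Type u} [AddCommGroup P] [Module R P]
    [Module.Projective R P] [AddCommGroup M] [Module R M] {g : P →ₗ[R] M}
    {h : M →ₗ[R] P} {c : R} (hgh : ∀ x, g (h x) = c • x) {T : Submodule R M}
    (hT : ∀ x ∈ T, ∃ J : Ideal R, IsGVIdeal R J ∧ ∀ a ∈ J, a • x = 0)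
    {L : Type u} [AddCommGroup L] [Module R L] {ι : (M ⧸ T) →ₗ[R] L}
    (hL : IsWEnvelope R (M ⧸ T) L ι) {N : Type u} [AddCommGroup N] [Module R N]
    (hN : IsWModule R N) {X : Type u} [AddCommGroup X] [Module R X]
    {i : N →ₗ[R] X} {q : X →ₗ[R] L} (hi : Function.Injective i)
    (hq : Function.Exact i q) (hqs : Function.Surjective q) :
    ∃ s : X →ₗ[R] N, ∀ n, s (i n) = c • n := by
  obtain ⟨t, ht⟩ := Module.projective_lifting_property q (ι ∘ₗ T.mkQ ∘ₗ g) hqs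
  have hX := IsGVTorsionFree.of_exact hi hq hN.1 hL.2.1.1
  have hTt : T ≤ LinearMap.ker (t ∘ₗ h) := fun x hx => by
    obtain ⟨J, hJ, hJx⟩ := hT x hx
    exact hX _ ⟨J, hJ, fun a ha => by rw [← map_smul, hJx a ha, map_zero]⟩
  obtain ⟨r, hr⟩ := hN.exists_lift_extending hi hq hqs hL.1 hL.2.2
    (θ := T.liftQ (t ∘ₗ h) hTt) (c := c) (fun a => by
      obtain ⟨x, rfl⟩ := T.mkQ_surjective a
      refine (LinearMap.congr_fun ht (h x)).trans ?_
      simp [hgh])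
  let ρ : X →ₗ[R] X := c • LinearMap.id - r ∘ₗ q
  have hρ (x : X) : ρ x ∈ LinearMap.range i := (hq _).1 (by simp [ρ, hr])
  let e := LinearEquiv.ofInjective i hi
  refine ⟨e.symm.toLinearMap ∘ₗ ρ.codRestrict _ hρ, fun n => hi ?_⟩
  refine (congrArg Subtype.val (e.apply_symm_apply _)).trans ?_
  simp [ρ, hq.apply_apply_eq_zero]

/-- If `c` annihilates every extension of `L` by `N`, then it annihilates `Ext¹(L, N)`. -/
theorem smul_extMod_one_eq_zero {L N : Type u} [AddCommGroup L] [Module R L]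
    [AddCommGroup N] [Module R N] {c : R}
    (H : ∀ (X : Type u) [AddCommGroup X] [Module R X] (i : N →ₗ[R] X) (q : X →ₗ[R] L),
      Function.Injective i → Function.Exact i q → Function.Surjective q →
        ∃ s : X →ₗ[R] N, ∀ n, s (i n) = c • n)
    (x : extMod R L 1 N) : c • x = 0 := by
  let P := projectiveResolution (ModuleCat.of R L)
  let ε : P.complex.X 0 →ₗ[R] L := resolutionAugmentation P
  have hε : Function.Surjective ε := resolutionAugmentation_surjective P
  have hex : Function.Exact (P.complex.d 1 0).hom ε := resolutionAugmentation_exact P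
  refine smul_ext_one_eq_zero P N (fun f hf => ?_) x
  let D : P.complex.X 1 →ₗ[R] P.complex.X 0 := (P.complex.d 1 0).hom
  let K : Submodule R (P.complex.X 0 × N) := LinearMap.range (D.prod (-f.hom))
  let q : (P.complex.X 0 × N) ⧸ K →ₗ[R] L := K.liftQ (ε ∘ₗ LinearMap.fst R _ _) (by
    rintro _ ⟨p, rfl⟩
    exact hex.apply_apply_eq_zero p)
  let i : N →ₗ[R] (P.complex.X 0 × N) ⧸ K := K.mkQ ∘ₗ LinearMap.inr R _ _
  have hmk (p : P.complex.X 1) : K.mkQ (D p, 0) = i (f.hom p) := by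
    rw [← sub_eq_zero]
    refine (map_sub K.mkQ _ _).symm.trans ((Submodule.Quotient.mk_eq_zero K).2 ⟨p, ?_⟩)
    simp
  have hi : Function.Injective i := by
    rw [injective_iff_map_eq_zero]
    intro n hn
    obtain ⟨p, hp⟩ := (Submodule.Quotient.mk_eq_zero K).1 hn
    obtain ⟨p', hp'⟩ := (ShortComplex.moduleCat_exact_iff _).1 (P.exact_succ 0) p
      (congrArg Prod.fst hp)
    have h0 : f.hom p = 0 := by
      rw [← hp']
      exact congr($hf p')
    refine (congrArg Prod.snd hp).symm.trans ?_
    simp [h0]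
  have hq : Function.Exact i q := by
    intro y
    constructor
    · obtain ⟨⟨y, n⟩, rfl⟩ := K.mkQ_surjective y
      intro hy
      obtain ⟨p, rfl⟩ := (hex y).1 hy
      refine ⟨f.hom p + n, ?_⟩
      rw [map_add, ← hmk]
      exact (map_add K.mkQ _ _).symm.trans (by simp [D])
    · rintro ⟨n, rfl⟩
      exact map_zero ε
  have hqs : Function.Surjective q := fun l => by
    obtain ⟨y, rfl⟩ := hε l
    exact ⟨K.mkQ (y, 0), rfl⟩
  obtain ⟨s, hs⟩ := H _ i q hi hq hqs
  refine ⟨ModuleCat.ofHom (s ∘ₗ K.mkQ ∘ₗ LinearMap.inl R _ _), ?_⟩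
  ext p
  exact (congrArg s (hmk p)).trans (hs _)

end Main

/-- Every w-split module is w-projective. -/
theorem stmt9 {R : Type u} [CommRing R] {M : Type u} [AddCommGroup M] [Module R M]
    (hM : IsWSplitModule R M) : IsWProjective R M := by
  obtain ⟨P, _, _, _, g, -, n, d, hd, h, hgh⟩ := hM
  intro T hT L _ _ ι hL N _ _ _ hN x
  refine ⟨_, hd, fun a ha => ?_⟩
  refine (Submodule.mem_annihilator_span_singleton x a).1 (?_ : a ∈ _)
  refine Submodule.span_le.2 ?_ ha
  rintro _ ⟨k, rfl⟩
  refine (Submodule.mem_annihilator_span_singleton x _).2 ?_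
  exact smul_extMod_one_eq_zero (fun X _ _ i q hi hq hqs =>
    exists_smul_retraction_of_lift (hgh k) (fun x hx => (hT x).1 hx) hL hN hi hq hqs) x
end

section
/- Let R be a two-dimensional regular local ring with maximal ideal m, and let M = ⊕{R/J : J a GV-ideal of R}. Then M is GV-torsion (hence w-projective) but M is not w-split. -/
open CategoryTheory

universe u

section GVIdeal

variable {R : Type u} [CommRing R]

theorem IsGVIdeal.eq_zero_of_forall_mul_eq_zero {J : Ideal R} (hJ : IsGVIdeal R J) {r : R}
    (h : ∀ a ∈ J, r * a = 0) : r = 0 :=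
  hJ.2.1 (LinearMap.ext fun a => by simpa using h a a.2)

theorem IsGVIdeal.exists_forall_eq_mul {J : Ideal R} (hJ : IsGVIdeal R J) (f : J →ₗ[R] R) :
    ∃ r : R, ∀ a (ha : a ∈ J), f ⟨a, ha⟩ = r * a := by
  obtain ⟨r, rfl⟩ := hJ.2.2 f
  exact ⟨r, fun a ha => rfl⟩

theorem isGVIdeal_of {J : Ideal R} (hfg : J.FG) (h₁ : ∀ r : R, (∀ a ∈ J, r * a = 0) → r = 0)
    (h₂ : ∀ f : J →ₗ[R] R, ∃ r : R, ∀ a (ha : a ∈ J), f ⟨a, ha⟩ = r * a) :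
    IsGVIdeal R J := by
  refine ⟨hfg, fun r s hrs => ?_, fun f => ?_⟩
  · refine sub_eq_zero.1 (h₁ _ fun a ha => ?_)
    have := LinearMap.congr_fun hrs ⟨a, ha⟩
    rw [sub_mul, sub_eq_zero]
    simpa using this
  · obtain ⟨r, hr⟩ := h₂ f
    exact ⟨r, LinearMap.ext fun a => (hr a a.2).symm⟩

theorem isGVIdeal_top : IsGVIdeal R (⊤ : Ideal R) := by
  refine isGVIdeal_of ⟨{1}, by simp⟩ (fun r h => by simpa using h 1 trivial) fun f =>
    ⟨f ⟨1, trivial⟩, fun a ha => ?_⟩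
  have := f.map_smul a ⟨1, trivial⟩
  rw [mul_comm, ← smul_eq_mul, ← this]
  congr 1
  ext
  simp

theorem IsGVIdeal.mul {I J : Ideal R} (hI : IsGVIdeal R I) (hJ : IsGVIdeal R J) :
    IsGVIdeal R (I * J) := by
  refine isGVIdeal_of (hI.1.mul hJ.1) (fun r h => ?_) fun f => ?_
  · refine hI.eq_zero_of_forall_mul_eq_zero fun a ha =>
      hJ.eq_zero_of_forall_mul_eq_zero fun b hb => ?_
    rw [mul_assoc]
    exact h _ (Ideal.mul_mem_mul ha hb)
  · let F (a : I) : J →ₗ[R] R :=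
      { toFun := fun b => f ⟨a * b, Ideal.mul_mem_mul a.2 b.2⟩
        map_add' := fun b c => by
          rw [← map_add]
          congr 1
          ext
          simp [mul_add]
        map_smul' := fun s b => by
          rw [RingHom.id_apply, ← map_smul]
          congr 1
          ext
          simp [mul_left_comm] }
    choose g hg using fun a : I => hJ.exists_forall_eq_mul (F a)
    have hg' (a b : R) (ha : a ∈ I) (hb : b ∈ J) :
        f ⟨a * b, Ideal.mul_mem_mul ha hb⟩ = g ⟨a, ha⟩ * b := hg ⟨a, ha⟩ b hb
    let G : I →ₗ[R] R :=
      { toFun := g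
        map_add' := fun a c => by
          refine sub_eq_zero.1 (hJ.eq_zero_of_forall_mul_eq_zero fun b hb => ?_)
          rw [sub_mul, add_mul, ← hg' _ _ a.2 hb, ← hg' _ _ c.2 hb, ← hg' _ _ (a + c).2 hb,
            ← map_add, sub_eq_zero]
          congr 1
          ext
          simp [add_mul]
        map_smul' := fun s a => by
          refine sub_eq_zero.1 (hJ.eq_zero_of_forall_mul_eq_zero fun b hb => ?_)
          rw [sub_mul, RingHom.id_apply, smul_eq_mul, mul_assoc, ← hg' _ _ a.2 hb,
            ← hg' _ _ (s • a).2 hb, sub_eq_zero, ← smul_eq_mul s, ← map_smul]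
          congr 1
          ext
          simp [mul_assoc] }
    obtain ⟨r, hr⟩ := hI.exists_forall_eq_mul G
    refine ⟨r, fun c hc => ?_⟩
    induction hc using Submodule.mul_induction_on' with
    | mem_mul_mem a ha b hb =>
      rw [hg' a b ha hb, ← mul_assoc, ← hr a ha]
      rfl
    | add c hc d hd ihc ihd =>
      rw [mul_add, ← ihc, ← ihd, ← map_add]
      rfl

theorem IsGVIdeal.pow {I : Ideal R} (hI : IsGVIdeal R I) (n : ℕ) : IsGVIdeal R (I ^ n) := by
  induction n with
  | zero => simpa using isGVIdeal_top
  | succ n ih => exact pow_succ I n ▸ ih.mul hI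

end GVIdeal

section GVTorsion

variable {R : Type u} [CommRing R]

theorem isGVTorsion_directSum_quotient :
    IsGVTorsion R (DirectSum {J : Ideal R // IsGVIdeal R J} fun J => R ⧸ J.1) := by
  classical
  intro x
  induction x using DirectSum.induction_on with
  | zero => exact ⟨⊤, isGVIdeal_top, fun a _ => smul_zero a⟩
  | of J x =>
    refine ⟨J.1, J.2, fun a ha => ?_⟩
    obtain ⟨r, rfl⟩ := Ideal.Quotient.mk_surjective x
    rw [← DirectSum.lof_eq_of R, ← map_smul]
    have : a • Ideal.Quotient.mk J.1 r = 0 := by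
      rw [← Ideal.Quotient.mk_eq_mk, ← Submodule.Quotient.mk_smul, Submodule.Quotient.mk_eq_zero]
      exact J.1.mul_mem_right r ha
    rw [this, map_zero]
  | add x y hx hy =>
    obtain ⟨I, hI, hIx⟩ := hx
    obtain ⟨J, hJ, hJy⟩ := hy
    refine ⟨I * J, hI.mul hJ, fun a ha => ?_⟩
    have hIJ : a ∈ I ⊓ J := Ideal.mul_le_inf ha
    rw [smul_add, hIx a hIJ.1, hJy a hIJ.2, add_zero]

theorem isGVTorsionFree_of_projective (P : Type u) [AddCommGroup P] [Module R P]
    [Module.Projective R P] : IsGVTorsionFree R P := by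
  rintro x ⟨J, hJ, hx⟩
  obtain ⟨s, hs⟩ := Module.Projective.out (R := R) (P := P)
  suffices h : s x = 0 by rw [← hs x, h, map_zero]
  ext p
  refine hJ.eq_zero_of_forall_mul_eq_zero fun a ha => ?_
  rw [mul_comm, ← smul_eq_mul, ← Finsupp.smul_apply, ← map_smul, hx a ha, map_zero,
    Finsupp.zero_apply]

theorem IsGVTorsion.isWProjective {M : Type u} [AddCommGroup M] [Module R M]
    (hM : IsGVTorsion R M) : IsWProjective R M := by
  intro T hT L _ _ ι hι N _ _ _ _
  have hT' : T = ⊤ := eq_top_iff.2 fun x _ => (hT x).2 (hM x)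
  have hL (l : L) : l = 0 := by
    refine hι.2.1.1 l ?_
    obtain ⟨J, hJ, h⟩ := hι.2.2 (Submodule.Quotient.mk l)
    refine ⟨J, hJ, fun a ha => ?_⟩
    have := h a ha
    rw [← Submodule.Quotient.mk_smul, Submodule.Quotient.mk_eq_zero] at this
    obtain ⟨q, hq⟩ := this
    obtain ⟨m, rfl⟩ := T.mkQ_surjective q
    rw [← hq, Submodule.mkQ_apply, (Submodule.Quotient.mk_eq_zero T).2 (hT' ▸ trivial), map_zero]
  have : Subsingleton L := subsingleton_of_forall_eq 0 hL
  have : Projective (ModuleCat.of R L) :=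
    (ModuleCat.isZero_of_subsingleton (ModuleCat.of R L)).projective
  have := ModuleCat.subsingleton_of_isZero
    (isZero_Ext_succ_of_projective (R := R) (ModuleCat.of R L) (ModuleCat.of R N) 0)
  exact fun x => ⟨⊤, isGVIdeal_top, fun a _ => this.elim _ _⟩

theorem IsGVTorsion.exists_isGVIdeal_of_isWSplitModule {M : Type u} [AddCommGroup M] [Module R M]
    (hM : IsGVTorsion R M) (h : IsWSplitModule R M) :
    ∃ J : Ideal R, IsGVIdeal R J ∧ ∀ a ∈ J, ∀ x : M, a • x = 0 := by
  obtain ⟨P, _, _, _, g, -, n, d, hd, h, hgh⟩ := h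
  refine ⟨_, hd, fun a ha x => ?_⟩
  suffices Ideal.span (Set.range d) ≤ LinearMap.ker (LinearMap.toSpanSingleton R M x) from this ha
  rw [Ideal.span_le]
  rintro _ ⟨k, rfl⟩
  have hk : h k x = 0 := by
    refine isGVTorsionFree_of_projective (R := R) P _ ?_
    obtain ⟨J, hJ, hJx⟩ := hM x
    exact ⟨J, hJ, fun a ha => by rw [← map_smul, hJx a ha, map_zero]⟩
  change d k • x = 0
  rw [← hgh, hk, map_zero]

theorem le_of_forall_smul_directSum_quotient_eq_zero {I : Ideal R}
    (hI : ∀ a ∈ I, ∀ x : DirectSum {J : Ideal R // IsGVIdeal R J} fun J => R ⧸ J.1, a • x = 0)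
    {J : Ideal R} (hJ : IsGVIdeal R J) : I ≤ J := by
  classical
  intro a ha
  have := congr_arg (DirectSum.component R _ _ ⟨J, hJ⟩)
    (hI a ha (DirectSum.lof R _ (fun J : {J : Ideal R // IsGVIdeal R J} => R ⧸ J.1) ⟨J, hJ⟩
      (Submodule.Quotient.mk 1)))
  rw [map_smul, DirectSum.component.lof_self, map_zero, ← Submodule.Quotient.mk_smul,
    Submodule.Quotient.mk_eq_zero] at this
  simpa using this

end GVTorsion

section RegularLocalRing

open IsLocalRing

theorem IsLocalRing.isDomain_of_forall_dvd {S : Type*} [CommRing S] [IsNoetherianRing S]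
    [IsLocalRing S] {y : S} (hyu : ¬ IsUnit y) (hy : ¬ IsNilpotent y)
    (h : ∀ s : S, ¬ IsUnit s → y ∣ s) :
    IsDomain S := by
  have key (s : S) (hs : s ≠ 0) : ∃ k u, IsUnit u ∧ s = y ^ k * u := by
    have hfin : FiniteMultiplicity y s := by
      by_contra hc
      rw [FiniteMultiplicity.not_iff_forall] at hc
      have := Ideal.iInf_pow_eq_bot_of_isLocalRing (Ideal.span {y})
        (by rwa [Ne, Ideal.span_singleton_eq_top])
      refine hs ((Submodule.mem_bot S).1 (this ▸ (Submodule.mem_iInf _).2 fun n => ?_))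
      rw [Ideal.span_singleton_pow, Ideal.mem_span_singleton]
      exact hc n
    obtain ⟨u, hu, hyu⟩ := hfin.exists_eq_pow_mul_and_not_dvd
    exact ⟨_, u, by_contra fun hn => hyu (h u hn), hu⟩
  have : NoZeroDivisors S := by
    refine ⟨fun {s t} hst => ?_⟩
    by_contra! hc
    obtain ⟨k, u, hu, rfl⟩ := key s hc.1
    obtain ⟨l, v, hv, rfl⟩ := key t hc.2
    refine hy ⟨k + l, ?_⟩
    rw [mul_mul_mul_comm, ← pow_add] at hst
    exact (hu.mul hv).mul_left_eq_zero.1 hst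
  exact NoZeroDivisors.to_isDomain S

variable {R : Type*} [CommRing R] [IsNoetherianRing R] [IsLocalRing R]

theorem IsLocalRing.notMem_minimalPrimes_of_isPrincipal (hdim : ringKrullDim R = 2)
    (I : Ideal R) [I.IsPrincipal] : maximalIdeal R ∉ I.minimalPrimes := by
  intro h
  have h₁ := Ideal.height_le_one_of_isPrincipal_of_mem_minimalPrimes I _ h
  have h₂ := maximalIdeal_height_eq_ringKrullDim (R := R)
  rw [hdim] at h₂
  have h₃ : (maximalIdeal R).height = 2 := WithBot.coe_injective h₂
  rw [h₃] at h₁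
  exact absurd h₁ (by decide)

theorem IsLocalRing.isPrime_span_singleton (hdim : ringKrullDim R = 2) {x y : R}
    (hm : maximalIdeal R = Ideal.span {x, y}) : (Ideal.span {x}).IsPrime := by
  have hx : x ∈ maximalIdeal R := hm ▸ Ideal.subset_span (by simp)
  have hxm : Ideal.span {x} ≤ maximalIdeal R := (Ideal.span_singleton_le_iff_mem _).2 hx
  have : Nontrivial (R ⧸ Ideal.span {x}) :=
    Ideal.Quotient.nontrivial_iff.2 fun h =>
      (maximalIdeal.isMaximal R).ne_top (top_le_iff.1 (h ▸ hxm))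
  have : IsLocalRing (R ⧸ Ideal.span {x}) :=
    .of_surjective' (Ideal.Quotient.mk _) Ideal.Quotient.mk_surjective
  have := IsLocalHom.of_surjective (Ideal.Quotient.mk (Ideal.span {x}))
    Ideal.Quotient.mk_surjective
  rw [← Ideal.Quotient.isDomain_iff_prime]
  refine IsLocalRing.isDomain_of_forall_dvd (y := Ideal.Quotient.mk _ y) ?_ ?_
    fun s hs => ?_
  · exact (map_mem_nonunits_iff (Ideal.Quotient.mk (Ideal.span {x})) y).2
      (hm ▸ Ideal.subset_span (by simp) : y ∈ maximalIdeal R)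
  · rintro ⟨n, hn⟩
    rw [← map_pow, Ideal.Quotient.eq_zero_iff_mem] at hn
    refine notMem_minimalPrimes_of_isPrincipal hdim (Ideal.span {x})
      ⟨⟨inferInstance, hxm⟩, fun q ⟨hq, hxq⟩ _ => ?_⟩
    rw [hm, Ideal.span_le, Set.insert_subset_iff, Set.singleton_subset_iff]
    exact ⟨hxq (Ideal.mem_span_singleton_self x), hq.mem_of_pow_mem n (hxq hn)⟩
  · obtain ⟨r, rfl⟩ := Ideal.Quotient.mk_surjective s
    have hr : r ∈ maximalIdeal R := fun hu => hs (hu.map _)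
    rw [hm, Ideal.mem_span_pair] at hr
    obtain ⟨a, b, rfl⟩ := hr
    refine ⟨Ideal.Quotient.mk _ b, ?_⟩
    rw [map_add, map_mul, map_mul,
      Ideal.Quotient.eq_zero_iff_mem.2 (Ideal.mem_span_singleton_self x), mul_zero, zero_add,
      mul_comm]

theorem IsLocalRing.exists_maximalIdeal_eq_span_pair_notMem_minimalPrimes
    (hdim : ringKrullDim R = 2) (hreg : ∃ x y : R, maximalIdeal R = Ideal.span {x, y}) :
    ∃ x y : R, maximalIdeal R = Ideal.span {x, y} ∧ ∀ q ∈ minimalPrimes R, x ∉ q := by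
  obtain ⟨x, y, hm⟩ := hreg
  by_contra! hc
  have hy : y ∈ maximalIdeal R := hm ▸ Ideal.subset_span (by simp)
  have hm' (n : ℕ) : maximalIdeal R = Ideal.span {x + y ^ (n + 1), y} := by
    rw [hm, pow_succ, Ideal.span_pair_add_mul_right]
  choose q hq hxq using fun n => hc _ y (hm' n)
  have : Finite (minimalPrimes R) := (minimalPrimes.finite_of_isNoetherianRing R).to_subtype
  obtain ⟨k, l, hkl, hq'⟩ := Finite.exists_ne_map_eq_of_infinite
    fun n => (⟨q n, hq n⟩ : minimalPrimes R)
  replace hq' : q k = q l := congr_arg Subtype.val hq'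
  wlog hlt : k < l generalizing k l
  · exact this l k hkl.symm hq'.symm (by omega)
  have hp : (q k).IsPrime := (hq k).1.1
  have hyq : y ∈ q k := by
    have h₁ : y ^ (k + 1) * (1 - y ^ (l - k)) ∈ q k := by
      have := (q k).sub_mem (hxq k) (hq' ▸ hxq l)
      convert this using 1
      rw [mul_sub, ← pow_add, show k + 1 + (l - k) = l + 1 by omega]
      ring
    refine hp.mem_of_pow_mem _ ((hp.mem_or_mem h₁).resolve_right fun h₂ => hp.ne_top ?_)
    refine Ideal.eq_top_of_isUnit_mem _ h₂ (isUnit_one_sub_self_of_mem_nonunits _ ?_)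
    exact (maximalIdeal R).pow_mem_of_mem hy _ (by omega)
  have hmq : maximalIdeal R ≤ q k := by
    rw [hm' k, Ideal.span_le, Set.insert_subset_iff, Set.singleton_subset_iff]
    exact ⟨hxq k, hyq⟩
  refine notMem_minimalPrimes_of_isPrincipal hdim (⊥ : Ideal R) ?_
  rw [le_antisymm hmq (le_maximalIdeal hp.ne_top)]
  exact hq k

theorem IsLocalRing.eq_bot_of_isPrime_of_le_span_singleton {x : R}
    (hx : x ∈ maximalIdeal R) {q : Ideal R} [q.IsPrime] (hq : q ≤ Ideal.span {x})
    (hxq : x ∉ q) : q = ⊥ := by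
  refine Submodule.eq_bot_of_le_smul_of_le_jacobson_bot (Ideal.span {x}) q
    (IsNoetherian.noetherian q) (fun a ha => ?_) ?_
  · obtain ⟨b, rfl⟩ := Ideal.mem_span_singleton.1 (hq ha)
    exact Submodule.smul_mem_smul (Ideal.mem_span_singleton_self x)
      ((Ideal.IsPrime.mem_or_mem ‹_› ha).resolve_left hxq)
  · rw [jacobson_eq_maximalIdeal _ bot_ne_top]
    exact (Ideal.span_singleton_le_iff_mem _).2 hx

end RegularLocalRing

theorem isGVIdeal_maximalIdeal {R : Type u} [CommRing R] [IsNoetherianRing R] [IsLocalRing R]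
    (hdim : ringKrullDim R = 2)
    (hreg : ∃ x y : R, IsLocalRing.maximalIdeal R = Ideal.span {x, y}) :
    IsGVIdeal R (IsLocalRing.maximalIdeal R) := by
  obtain ⟨x, y, hm, hxq⟩ :=
    IsLocalRing.exists_maximalIdeal_eq_span_pair_notMem_minimalPrimes hdim hreg
  have hx : x ∈ IsLocalRing.maximalIdeal R := hm ▸ Ideal.subset_span (by simp)
  have hy : y ∈ IsLocalRing.maximalIdeal R := hm ▸ Ideal.subset_span (by simp)
  have hxp : (Ideal.span {x}).IsPrime := IsLocalRing.isPrime_span_singleton hdim hm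
  have : IsDomain R := by
    obtain ⟨q, hq, hqx⟩ := Ideal.exists_minimalPrimes_le (bot_le : ⊥ ≤ Ideal.span {x})
    have hqp : q.IsPrime := hq.1.1
    have := IsLocalRing.eq_bot_of_isPrime_of_le_span_singleton hx hqx (hxq q hq)
    have : (⊥ : Ideal R).IsPrime := this ▸ hqp
    exact IsDomain.of_bot_isPrime R
  have hx0 : x ≠ 0 := by
    rintro rfl
    obtain ⟨q, hq⟩ := Ideal.nonempty_minimalPrimes (bot_ne_top (α := Ideal R))
    exact hxq q hq q.zero_mem
  have hyx : y ∉ Ideal.span {x} := by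
    intro h
    have hmx : IsLocalRing.maximalIdeal R = Ideal.span {x} := by
      rw [hm, Ideal.span_insert, sup_eq_left]
      exact (Ideal.span_singleton_le_iff_mem _).2 h
    refine IsLocalRing.notMem_minimalPrimes_of_isPrincipal hdim (Ideal.span {x}) ?_
    rw [hmx, Ideal.minimalPrimes_eq_subsingleton_self]
    rfl
  refine isGVIdeal_of (IsNoetherian.noetherian _)
    (fun r h => (mul_eq_zero.1 (h x hx)).resolve_right hx0) fun f => ?_
  have hsymm (a b : R) (ha : a ∈ IsLocalRing.maximalIdeal R)
      (hb : b ∈ IsLocalRing.maximalIdeal R) : a * f ⟨b, hb⟩ = b * f ⟨a, ha⟩ := by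
    rw [← smul_eq_mul, ← smul_eq_mul, ← map_smul, ← map_smul]
    congr 1
    ext
    simp [mul_comm]
  obtain ⟨r, hr⟩ : x ∣ f ⟨x, hx⟩ := by
    rw [← Ideal.mem_span_singleton]
    refine (hxp.mem_or_mem (x := y) ?_).resolve_left hyx
    rw [← hsymm x y hx hy]
    exact Ideal.mul_mem_right _ _ (Ideal.mem_span_singleton_self x)
  refine ⟨r, fun a ha => mul_left_cancel₀ hx0 ?_⟩
  rw [hsymm x a hx ha, hr]
  ring

/-- Over a 2-dimensional regular local ring `R`, the module `M = ⊕_{J GV-ideal} R/J` is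
GV-torsion (hence w-projective) but not w-split. -/
theorem stmt11 {R : Type u} [CommRing R] [IsNoetherianRing R] [IsLocalRing R]
    (hdim : ringKrullDim R = 2)
    (hreg : ∃ x y : R, IsLocalRing.maximalIdeal R = Ideal.span {x, y}) :
    IsGVTorsion R (DirectSum {J : Ideal R // IsGVIdeal R J} fun J => R ⧸ J.1) ∧
    IsWProjective R (DirectSum {J : Ideal R // IsGVIdeal R J} fun J => R ⧸ J.1) ∧
    ¬ IsWSplitModule R (DirectSum {J : Ideal R // IsGVIdeal R J} fun J => R ⧸ J.1) := by
  have htor := isGVTorsion_directSum_quotient (R := R)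
  refine ⟨htor, htor.isWProjective, fun hsplit => ?_⟩
  obtain ⟨J, hJ, hJM⟩ := htor.exists_isGVIdeal_of_isWSplitModule hsplit
  have hbot : J ≤ ⊥ := by
    rw [← Ideal.iInf_pow_eq_bot_of_isLocalRing (IsLocalRing.maximalIdeal R)
      (IsLocalRing.maximalIdeal.isMaximal R).ne_top]
    exact le_iInf fun n => le_of_forall_smul_directSum_quotient_eq_zero hJM
      ((isGVIdeal_maximalIdeal hdim hreg).pow n)
  refine one_ne_zero (α := R) (hJ.eq_zero_of_forall_mul_eq_zero fun a ha => ?_)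
  rw [(Submodule.mem_bot R).1 (hbot ha), mul_zero]
end

section
/- Let M be a GV-torsionfree w-projective R-module. Then M is w-split if and only if there is a GV-ideal J of R with J·M_w ⊆ M. -/
open CategoryTheory

universe u

theorem exists_surjective_cocycles_extMod {R : Type u} [CommRing R]
    {X N : Type u} [AddCommGroup X] [Module R X] [AddCommGroup N] [Module R N]
    (P : ProjectiveResolution (ModuleCat.of R X)) :
    ∃ q : LinearMap.ker (LinearMap.lcomp R N (P.complex.d 2 1).hom) →ₗ[R] extMod R X 1 N,
      Function.Surjective q ∧ ∀ φ, q φ = 0 ↔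
        ∃ ψ : P.complex.X 0 →ₗ[R] N, ψ ∘ₗ (P.complex.d 1 0).hom = φ := by
  let C := P.complex.linearYonedaObj R (ModuleCat.of R N)
  let S := C.sc' 0 1 2
  let e : extMod R X 1 N ≅ S.moduleCatLeftHomologyData.H :=
    P.isoExt (R := R) 1 (ModuleCat.of R N) ≪≫
      ShortComplex.homologyMapIso (C.isoSc' 0 1 2 (by simp) (by simp)) ≪≫ S.moduleCatHomologyIso
  let Φ : LinearMap.ker (LinearMap.lcomp R N (P.complex.d 2 1).hom) →ₗ[R]
      LinearMap.ker S.g.hom :=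
    { toFun := fun φ => ⟨ModuleCat.ofHom φ.1, by
        have := φ.2
        refine ModuleCat.hom_ext ?_
        exact this⟩
      map_add' := fun _ _ => rfl
      map_smul' := fun _ _ => rfl }
  have hΦ : Function.Surjective Φ := fun x => ⟨⟨ModuleCat.Hom.hom x.1, by
    have := x.2
    exact congrArg ModuleCat.Hom.hom this⟩, rfl⟩
  refine ⟨e.toLinearEquiv.symm.toLinearMap ∘ₗ
    (LinearMap.range S.moduleCatToCycles).mkQ ∘ₗ Φ, ?_, fun φ => ?_⟩
  · exact e.toLinearEquiv.symm.surjective.comp ((Submodule.mkQ_surjective _).comp hΦ)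
  · have h1 : (e.toLinearEquiv.symm.toLinearMap ∘ₗ
        (LinearMap.range S.moduleCatToCycles).mkQ ∘ₗ Φ) φ = 0 ↔
        Φ φ ∈ LinearMap.range S.moduleCatToCycles := by
      rw [← Submodule.Quotient.mk_eq_zero]
      exact e.toLinearEquiv.symm.map_eq_zero_iff
    rw [h1]
    constructor
    · rintro ⟨ψ, hψ⟩
      exact ⟨ModuleCat.Hom.hom ψ, congrArg (fun t => ModuleCat.Hom.hom (Subtype.val t)) hψ⟩
    · rintro ⟨ψ, hψ⟩
      exact ⟨ModuleCat.ofHom ψ, Subtype.ext (ModuleCat.hom_ext hψ)⟩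

theorem LinearMap.exists_comp_eq_of_ker_le {R : Type*} [Ring R] {A B C : Type*} [AddCommGroup A]
    [Module R A] [AddCommGroup B] [Module R B] [AddCommGroup C] [Module R C]
    (p : A →ₗ[R] B) (hp : Function.Surjective p) (f : A →ₗ[R] C)
    (h : LinearMap.ker p ≤ LinearMap.ker f) : ∃ g : B →ₗ[R] C, g ∘ₗ p = f := by
  refine ⟨(LinearMap.ker p).liftQ f h ∘ₗ (p.quotKerEquivOfSurjective hp).symm.toLinearMap, ?_⟩
  ext a
  have : (p.quotKerEquivOfSurjective hp).symm (p a) = Submodule.Quotient.mk a := by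
    rw [LinearEquiv.symm_apply_eq]; rfl
  simp [this]

/-- `Ext¹(X, N)` is the cokernel of restriction `Hom(F, N) → Hom(ker π, N)` along an
epimorphism `π : F → X` from a projective module, not depending on `N`. -/
theorem exists_projective_presentation_extMod (R : Type u) [CommRing R]
    (X : Type u) [AddCommGroup X] [Module R X] :
    ∃ (F : Type u) (_ : AddCommGroup F) (_ : Module R F) (π : F →ₗ[R] X),
      Module.Projective R F ∧ Function.Surjective π ∧
      ∀ (N : Type u) [AddCommGroup N] [Module R N],
        ∃ δ : (LinearMap.ker π →ₗ[R] N) →ₗ[R] extMod R X 1 N,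
          Function.Surjective δ ∧ ∀ φ, δ φ = 0 ↔
            ∃ ψ : F →ₗ[R] N, ψ ∘ₗ (LinearMap.ker π).subtype = φ := by
  let P := projectiveResolution (ModuleCat.of R X)
  let π : P.complex.X 0 →ₗ[R] X := ModuleCat.Hom.hom (P.π.f 0)
  have hP : Module.Projective R (P.complex.X 0) :=
    (IsProjective.iff_projective (P.complex.X 0)).2 (P.projective 0)
  have hπ : Function.Surjective π :=
    (ModuleCat.epi_iff_surjective (P.π.f 0)).1 inferInstance
  have ex0 : LinearMap.range (P.complex.d 1 0).hom = LinearMap.ker π :=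
    P.exact₀.moduleCat_range_eq_ker
  have ex1 : LinearMap.range (P.complex.d 2 1).hom = LinearMap.ker (P.complex.d 1 0).hom :=
    (P.exact_succ 0).moduleCat_range_eq_ker
  let d : P.complex.X 1 →ₗ[R] LinearMap.ker π :=
    (P.complex.d 1 0).hom.codRestrict _ fun x => ex0 ▸ LinearMap.mem_range_self _ x
  have hd : Function.Surjective d := by
    rintro ⟨y, hy⟩
    obtain ⟨x, rfl⟩ := ex0.symm ▸ hy
    exact ⟨x, rfl⟩
  have hd' : LinearMap.range (P.complex.d 2 1).hom = LinearMap.ker d := by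
    rw [ex1, LinearMap.ker_codRestrict]
  refine ⟨P.complex.X 0, inferInstance, inferInstance, π, hP, hπ, fun N _ _ => ?_⟩
  obtain ⟨q, hq, hq0⟩ := exists_surjective_cocycles_extMod (N := N) P
  refine ⟨q ∘ₗ LinearMap.codRestrict _ (LinearMap.lcomp R N d) fun φ => ?_, ?_, fun φ => ?_⟩
  · ext x
    have : d ((P.complex.d 2 1).hom x) = 0 :=
      (hd' ▸ LinearMap.mem_range_self (P.complex.d 2 1).hom x : _ ∈ LinearMap.ker d)
    simp [this]
  · intro z
    obtain ⟨c, rfl⟩ := hq z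
    obtain ⟨g, hg⟩ := LinearMap.exists_comp_eq_of_ker_le d hd c.1 (by
      rw [← hd']
      rintro _ ⟨x, rfl⟩
      exact LinearMap.congr_fun (LinearMap.mem_ker.1 c.2) x)
    exact ⟨g, congrArg q (Subtype.ext hg)⟩
  · refine (hq0 _).trans (exists_congr fun ψ => ⟨fun h => ?_, fun h => ?_⟩)
    · ext y
      obtain ⟨x, rfl⟩ := hd y
      exact LinearMap.congr_fun h x
    · ext x
      exact LinearMap.congr_fun h (d x)

/-- Every linear map from a GV-ideal to `N` is multiplication by an element of `N`. -/
def GVIdealsExtend (R : Type u) [CommRing R] (N : Type u) [AddCommGroup N] [Module R N] : Prop :=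
  ∀ J : Ideal R, IsGVIdeal R J → ∀ f : J →ₗ[R] N, ∃ n : N, ∀ a : J, f a = (a : R) • n

section GV
variable {R : Type u} [CommRing R]

theorem isGVTorsionFree_self : IsGVTorsionFree R R := by
  rintro x ⟨J, hJ, hx⟩
  refine hJ.2.1 (LinearMap.ext fun a => ?_)
  have := hx a a.2
  simp only [smul_eq_mul] at this
  simp [mul_comm x, this]

theorem gvIdealsExtend_self : GVIdealsExtend R R := by
  intro J hJ f
  obtain ⟨r, hr⟩ := hJ.2.2 f
  refine ⟨r, fun a => ?_⟩
  rw [← hr]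
  simp [mul_comm]

variable {N P : Type u} [AddCommGroup N] [Module R N] [AddCommGroup P] [Module R P]

theorem IsGVTorsionFree.of_injective (hN : IsGVTorsionFree R N) (s : P →ₗ[R] N)
    (hs : Function.Injective s) : IsGVTorsionFree R P := by
  rintro x ⟨J, hJ, hx⟩
  refine hs ((hN _ ⟨J, hJ, fun a ha => ?_⟩).trans (map_zero s).symm)
  rw [← map_smul, hx a ha, map_zero]

theorem IsGVTorsionFree.finsupp (X : Type u) (hN : IsGVTorsionFree R N) :
    IsGVTorsionFree R (X →₀ N) := by
  rintro v ⟨J, hJ, hv⟩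
  ext x
  exact hN _ ⟨J, hJ, fun a ha => by simpa using DFunLike.congr_fun (hv a ha) x⟩

theorem GVIdealsExtend.finsupp (X : Type u) (htf : IsGVTorsionFree R N)
    (hN : GVIdealsExtend R N) : GVIdealsExtend R (X →₀ N) := by
  classical
  intro J hJ f
  choose n hn using fun x => hN J hJ (Finsupp.lapply x ∘ₗ f)
  obtain ⟨k, s, hs⟩ := Submodule.fg_iff_exists_fin_generating_family.1
    ((Module.Finite.iff_fg.2 hJ.1).fg_top : (⊤ : Submodule R J).FG)
  let T : Finset X := Finset.univ.biUnion fun i => (f (s i)).support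
  have hT : ∀ x, n x ≠ 0 → x ∈ T := by
    intro x hx
    by_contra hxT
    refine hx (htf _ ⟨J, hJ, fun a ha => ?_⟩)
    have h0 : Finsupp.lapply x ∘ₗ f = 0 := by
      refine LinearMap.ext_on_range hs fun i => ?_
      by_contra hi
      exact hxT (Finset.mem_biUnion.2 ⟨i, Finset.mem_univ _, Finsupp.mem_support_iff.2 hi⟩)
    rw [← hn x ⟨a, ha⟩, h0, LinearMap.zero_apply]
  refine ⟨Finsupp.onFinset T n hT, fun a => ?_⟩
  ext x
  exact hn x a

theorem IsGVTorsionFree.of_projective [Module.Projective R P] : IsGVTorsionFree R P := by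
  obtain ⟨s, hs⟩ := Module.projective_def'.1 (inferInstance : Module.Projective R P)
  exact (isGVTorsionFree_self.finsupp P).of_injective s
    (Function.LeftInverse.injective (g := Finsupp.linearCombination R id)
      (LinearMap.congr_fun hs))

theorem GVIdealsExtend.of_projective [Module.Projective R P] : GVIdealsExtend R P := by
  obtain ⟨s, hs⟩ := Module.projective_def'.1 (inferInstance : Module.Projective R P)
  intro J hJ f
  obtain ⟨q, hq⟩ := gvIdealsExtend_self.finsupp P isGVTorsionFree_self J hJ (s ∘ₗ f)
  refine ⟨Finsupp.linearCombination R id q, fun a => ?_⟩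
  rw [← map_smul, ← hq a]
  exact (LinearMap.congr_fun hs (f a)).symm

theorem GVIdealsExtend.ker {X : Type u} [AddCommGroup X] [Module R X]
    (hP : GVIdealsExtend R P) (hX : IsGVTorsionFree R X) (π : P →ₗ[R] X) :
    GVIdealsExtend R (LinearMap.ker π) := by
  intro J hJ f
  obtain ⟨p, hp⟩ := hP J hJ ((LinearMap.ker π).subtype ∘ₗ f)
  refine ⟨⟨p, hX _ ⟨J, hJ, fun a ha => ?_⟩⟩, fun a => Subtype.ext (hp a)⟩
  rw [← map_smul, ← hp ⟨a, ha⟩]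
  exact (f ⟨a, ha⟩).2

/-- Linear maps into a GV-torsionfree module on which maps from GV-ideals extend can be extended
along injections with GV-torsion cokernel. -/
theorem exists_extension_of_isGVTorsion_quotient {M E : Type u} [AddCommGroup M] [Module R M]
    [AddCommGroup E] [Module R E] (htf : IsGVTorsionFree R N) (hN : GVIdealsExtend R N)
    (ι : M →ₗ[R] E) (hι : Function.Injective ι) (hE : IsGVTorsion R (E ⧸ LinearMap.range ι))
    (f : M →ₗ[R] N) : ∃ F : E →ₗ[R] N, F ∘ₗ ι = f := by
  have hJ : ∀ e : E, ∃ J : Ideal R, IsGVIdeal R J ∧ ∀ a ∈ J, ∃ m, ι m = a • e := fun e => by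
    obtain ⟨J, hJ, h⟩ := hE (Submodule.Quotient.mk e)
    exact ⟨J, hJ, fun a ha => (Submodule.Quotient.mk_eq_zero (LinearMap.range ι)).1 (h a ha)⟩
  have key : ∀ e : E, ∃ p : N, ∀ (a : R) (m : M), ι m = a • e → f m = a • p := fun e => by
    obtain ⟨J, hJ, h⟩ := hJ e
    choose g hg using h
    let G : J →ₗ[R] M :=
      { toFun := fun a => g a a.2
        map_add' := fun a b => hι <| by
          rw [map_add, hg, hg, hg, ← add_smul]; rfl
        map_smul' := fun c a => hι <| by
          rw [map_smul, hg, hg, smul_smul]; rfl }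
    obtain ⟨p, hp⟩ := hN J hJ (f ∘ₗ G)
    refine ⟨p, fun b m hm => sub_eq_zero.1 (htf _ ⟨J, hJ, fun a ha => ?_⟩)⟩
    have h1 : f (g a ha) = a • p := hp ⟨a, ha⟩
    have h2 : a • m = b • g a ha := hι <| by
      rw [map_smul, map_smul, hm, hg, smul_comm]
    rw [smul_sub, ← map_smul, h2, map_smul, h1, smul_comm, sub_self]
  choose F hF using key
  have uniq : ∀ (e : E) (p : N), (∀ (a : R) (m : M), ι m = a • e → f m = a • p) → F e = p :=
    fun e p hp => by
      obtain ⟨J, hJ, h⟩ := hJ e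
      refine sub_eq_zero.1 (htf _ ⟨J, hJ, fun a ha => ?_⟩)
      obtain ⟨m, hm⟩ := h a ha
      rw [smul_sub, ← hF e a m hm, ← hp a m hm, sub_self]
  refine ⟨{ toFun := F, map_add' := fun x y => uniq _ _ fun a m hm => ?_,
            map_smul' := fun c x => uniq _ _ fun a m hm => ?_ }, LinearMap.ext fun m => ?_⟩
  · obtain ⟨J, hJ, h⟩ := hJ x
    refine sub_eq_zero.1 (htf _ ⟨J, hJ, fun b hb => ?_⟩)
    obtain ⟨m', hm'⟩ := h b hb
    have h1 := hF x (a * b) (a • m') (by rw [map_smul, hm', smul_smul])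
    have h2 := hF y (a * b) (b • m - a • m') (by
      rw [map_sub, map_smul, map_smul, hm, hm', smul_add, smul_add]
      module)
    rw [map_sub, map_smul, h1] at h2
    rw [smul_sub, sub_eq_iff_eq_add.1 h2]
    module
  · have := hF x (a * c) m (by rw [hm, smul_smul])
    rw [this, RingHom.id_apply, smul_smul]
  · refine uniq _ _ fun a m' hm => ?_
    rw [← map_smul] at hm
    rw [hι hm, map_smul]

theorem GVIdealsExtend.isWModule (htf : IsGVTorsionFree R N) (hN : GVIdealsExtend R N) :
    IsWModule R N := by
  refine ⟨htf, fun J hJ => ?_⟩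
  obtain ⟨F, _, _, π, -, hπ, H⟩ := exists_projective_presentation_extMod R (R ⧸ J)
  obtain ⟨δ, hδ, hδ0⟩ := H N
  have h0 : ∀ z : extMod R (R ⧸ J) 1 N, z = 0 := fun z => by
    obtain ⟨φ, rfl⟩ := hδ z
    refine (hδ0 φ).2 (exists_extension_of_isGVTorsion_quotient htf hN _
      (LinearMap.ker π).injective_subtype (fun x => ⟨J, hJ, fun a ha => ?_⟩) φ)
    obtain ⟨y, rfl⟩ := Submodule.Quotient.mk_surjective _ x
    rw [← Submodule.Quotient.mk_smul, Submodule.Quotient.mk_eq_zero, Submodule.range_subtype,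
      LinearMap.mem_ker, map_smul]
    obtain ⟨r, hr⟩ := Ideal.Quotient.mk_surjective (π y)
    rw [← hr, ← Ideal.Quotient.mk_eq_mk, ← Submodule.Quotient.mk_smul,
      Submodule.Quotient.mk_eq_zero, smul_eq_mul]
    exact J.mul_mem_right r ha
  exact ⟨fun x y => (h0 x).trans (h0 y).symm⟩

theorem isWSplitSeq_of_forall_mem {B C : Type u} [AddCommGroup B] [Module R B] [AddCommGroup C]
    [Module R C] (g : B →ₗ[R] C) {J : Ideal R} (hJ : IsGVIdeal R J)
    (h : ∀ a ∈ J, ∃ s : C →ₗ[R] B, g ∘ₗ s = a • LinearMap.id) : IsWSplitSeq R g := by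
  obtain ⟨n, d, hd⟩ := Submodule.fg_iff_exists_fin_generating_family.1 hJ.1
  choose s hs using fun k => h (d k) (hd ▸ Submodule.subset_span (Set.mem_range_self k))
  exact ⟨n, d, (show Ideal.span (Set.range d) = J from hd).symm ▸ hJ, s,
    fun k c => LinearMap.congr_fun (hs k) c⟩

/-- If multiplication by `a` factors through a projective module `F` as `π ∘ s`, and
multiplication by `b` on the target of `π` factors through `M`, then their product on `M`
lifts along any epimorphism onto `M`. -/
theorem exists_lift_mul_of_factor {M E F B : Type u} [AddCommGroup M] [Module R M]
    [AddCommGroup E] [Module R E] [AddCommGroup F] [Module R F] [AddCommGroup B] [Module R B]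
    [Module.Projective R F] (ι : M →ₗ[R] E) (hι : Function.Injective ι) (g : B →ₗ[R] M)
    (hg : Function.Surjective g) (π : F →ₗ[R] E) (s : E →ₗ[R] F) {a b : R}
    (hs : ∀ e, π (s e) = b • e) (ha : ∀ e : E, a • e ∈ LinearMap.range ι) :
    ∃ t : M →ₗ[R] B, g ∘ₗ t = (a * b) • LinearMap.id := by
  choose c hc using ha
  let C : E →ₗ[R] M :=
    { toFun := c
      map_add' := fun x y => hι <| by rw [map_add, hc, hc, hc, smul_add]
      map_smul' := fun r x => hι <| by rw [map_smul, hc, hc, RingHom.id_apply, smul_comm] }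
  obtain ⟨u, hu⟩ := Module.projective_lifting_property g (C ∘ₗ π) hg
  refine ⟨u ∘ₗ s ∘ₗ ι, LinearMap.ext fun m => hι ?_⟩
  have h1 : g (u (s (ι m))) = c (π (s (ι m))) := LinearMap.congr_fun hu (s (ι m))
  simp only [LinearMap.comp_apply, LinearMap.smul_apply, LinearMap.id_apply]
  rw [h1, hc, hs, map_smul, mul_smul]

/-- If `Ext¹(E, N)` is GV-torsion for all w-modules `N`, then for some map `π` from a projective
module to the GV-torsionfree module `E`, multiplication by each element of some GV-ideal factors
through `π`. -/
theorem exists_projective_factor_of_isGVTorsion_extMod {E : Type u} [AddCommGroup E] [Module R E]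
    (htf : IsGVTorsionFree R E)
    (h : ∀ (N : Type u) (_ : AddCommGroup N) (_ : Module R N),
      IsGVTorsionFree R N → IsWModule R N → IsGVTorsion R (extMod R E 1 N)) :
    ∃ (F : Type u) (_ : AddCommGroup F) (_ : Module R F) (π : F →ₗ[R] E),
      Module.Projective R F ∧ ∃ J : Ideal R, IsGVIdeal R J ∧
        ∀ a ∈ J, ∃ s : E →ₗ[R] F, ∀ e, π (s e) = a • e := by
  obtain ⟨F, _, _, π, hF, hπ, H⟩ := exists_projective_presentation_extMod R E
  have hKtf : IsGVTorsionFree R (LinearMap.ker π) :=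
    (IsGVTorsionFree.of_projective (P := F)).of_injective _ (LinearMap.ker π).injective_subtype
  have hK : IsWModule R (LinearMap.ker π) :=
    (GVIdealsExtend.of_projective.ker htf π).isWModule hKtf
  obtain ⟨δ, -, hδ0⟩ := H (LinearMap.ker π)
  obtain ⟨J, hJ, hJδ⟩ := h _ _ _ hKtf hK (δ LinearMap.id)
  refine ⟨F, _, _, π, hF, J, hJ, fun a ha => ?_⟩
  obtain ⟨ψ, hψ⟩ := (hδ0 (a • LinearMap.id)).1 (by rw [map_smul, hJδ a ha])
  obtain ⟨s, hs⟩ := LinearMap.exists_comp_eq_of_ker_le π hπ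
    (a • LinearMap.id - (LinearMap.ker π).subtype ∘ₗ ψ) fun x hx => by
      have := congrArg Subtype.val (LinearMap.congr_fun hψ ⟨x, hx⟩)
      simp only [LinearMap.comp_apply, Submodule.subtype_apply, LinearMap.smul_apply,
        LinearMap.id_apply, Submodule.coe_smul] at this
      simp [this]
  refine ⟨s, fun e => ?_⟩
  obtain ⟨x, rfl⟩ := hπ e
  have h1 : s (π x) = a • x - (ψ x : F) := LinearMap.congr_fun hs x
  rw [h1, map_sub, map_smul, LinearMap.mem_ker.1 (ψ x).2, sub_zero]

theorem smul_mem_range_of_isWSplitModule {M E : Type u} [AddCommGroup M] [Module R M]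
    [AddCommGroup E] [Module R E] (ι : M →ₗ[R] E) (henv : IsWEnvelope R M E ι)
    (h : IsWSplitModule R M) :
    ∃ J : Ideal R, IsGVIdeal R J ∧ ∀ a ∈ J, ∀ e : E, a • e ∈ LinearMap.range ι := by
  obtain ⟨hι, ⟨hEtf, -⟩, hE⟩ := henv
  obtain ⟨P, _, _, _, g, -, n, d, hd, h, hgh⟩ := h
  choose H hH using fun k => exists_extension_of_isGVTorsion_quotient
    (IsGVTorsionFree.of_projective (P := P)) GVIdealsExtend.of_projective ι hι hE (h k)
  refine ⟨_, hd, fun a ha e => ?_⟩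
  induction ha using Submodule.span_induction with
  | mem x hx =>
    obtain ⟨k, rfl⟩ := hx
    refine ⟨g (H k e), sub_eq_zero.1 ?_⟩
    obtain ⟨J, hJ, hJe⟩ := hE (Submodule.Quotient.mk e)
    refine hEtf _ ⟨J, hJ, fun a ha => ?_⟩
    obtain ⟨m, hm⟩ := (Submodule.Quotient.mk_eq_zero (LinearMap.range ι)).1 (hJe a ha)
    have hm : ι m = a • e := hm
    have h1 : H k (ι m) = h k m := LinearMap.congr_fun (hH k) m
    rw [smul_sub, ← map_smul, ← map_smul, ← map_smul, smul_comm, ← hm, h1, hgh, map_smul, sub_self]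
  | zero => simp
  | add x y _ _ hx hy => rw [add_smul]; exact add_mem hx hy
  | smul r x _ hx => rw [smul_assoc]; exact Submodule.smul_mem _ r hx

/-- For GV-torsionfree `M` the torsion quotient in the definition of w-projectivity is trivial. -/
theorem IsWProjective.isGVTorsion_extMod {M E : Type u} [AddCommGroup M] [Module R M]
    [AddCommGroup E] [Module R E] (htf : IsGVTorsionFree R M) (hwp : IsWProjective R M)
    (ι : M →ₗ[R] E) (henv : IsWEnvelope R M E ι)
    (N : Type u) (_ : AddCommGroup N) (_ : Module R N) (hN : IsGVTorsionFree R N)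
    (hNw : IsWModule R N) : IsGVTorsion R (extMod R E 1 N) := by
  obtain ⟨hι, hEw, hE⟩ := henv
  refine hwp ⊥ (fun x => ⟨?_, htf x⟩) E _ _
    (ι ∘ₗ (Submodule.quotEquivOfEqBot ⊥ rfl).toLinearMap) ⟨?_, hEw, ?_⟩ N _ _ hN hNw
  · rintro rfl
    exact ⟨⊤, ⟨⟨{1}, by simp⟩, by
      refine ⟨fun r s h => by simpa using LinearMap.congr_fun h ⟨1, trivial⟩, fun f =>
        ⟨f ⟨1, trivial⟩, LinearMap.ext fun a => ?_⟩⟩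
      have h1 := map_smul f (a : R) ⟨1, trivial⟩
      have h2 : (a : R) • (⟨1, trivial⟩ : (⊤ : Ideal R)) = a := Subtype.ext (mul_one _)
      rw [h2] at h1
      exact (mul_comm _ _).trans h1.symm⟩, fun a _ => smul_zero a⟩
  · exact hι.comp (LinearEquiv.injective _)
  · rwa [LinearMap.range_comp_of_range_eq_top _ (LinearEquiv.range _)]

end GV


/-- A GV-torsionfree w-projective module `M` is w-split iff `J·M_w ⊆ M` for some
GV-ideal `J` (where `ι : M →ₗ E` realizes the w-envelope `M_w`). -/
theorem stmt14 {R : Type u} [CommRing R] {M : Type u} [AddCommGroup M] [Module R M]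
    (htf : IsGVTorsionFree R M) (hwp : IsWProjective R M)
    (E : Type u) [AddCommGroup E] [Module R E] (ι : M →ₗ[R] E)
    (henv : IsWEnvelope R M E ι) :
    IsWSplitModule R M ↔
      ∃ J : Ideal R, IsGVIdeal R J ∧ ∀ a ∈ J, ∀ e : E, a • e ∈ LinearMap.range ι := by
  refine ⟨smul_mem_range_of_isWSplitModule ι henv, fun ⟨J, hJ, hJE⟩ => ?_⟩
  obtain ⟨F, _, _, π, _, J', hJ', hs⟩ := exists_projective_factor_of_isGVTorsion_extMod henv.2.1.1
    (hwp.isGVTorsion_extMod htf ι henv)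
  have hg := Finsupp.linearCombination_id_surjective R M
  refine ⟨M →₀ R, inferInstance, inferInstance, inferInstance, _, hg,
    isWSplitSeq_of_forall_mem _ (hJ.mul hJ') fun r hr => ?_⟩
  induction hr using Submodule.mul_induction_on' with
  | mem_mul_mem a ha b hb =>
    obtain ⟨s, hs⟩ := hs b hb
    exact exists_lift_mul_of_factor ι henv.1 _ hg π s hs (hJE a ha)
  | add x _ y _ hx hy =>
    obtain ⟨s, hs⟩ := hx
    obtain ⟨t, ht⟩ := hy
    exact ⟨s + t, by rw [LinearMap.comp_add, hs, ht, add_smul]⟩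
end
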